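/- Let α > 0, Λ > 1, ε ∈ (0,1), m ∈ ℕ, K ≥ 1 and L > 0. Let x₁, …, x_K ∈ ℝ^d with clusters taken at scale Lε, with singleton set 𝓢, non-singleton clusters 𝓤 and chosen representatives u*(S), and let R : ℝ^d × ℝ^d → ℝ satisfy the standing covariance bound with parameters (α, Λ, ε); graph values are taken with respect to R(i,j) := R(x_i, x_j). Then there exists C > 0 depending only on Λ and α (in particular independent of L, ε, K, m and the points) such that for every k ∈ ℕ^𝓢, ℓ ∈ ℕ^𝓤 and every graph Γ ∈ Ω_{k,ℓ} there exists a graph Γ* ∈ Ω* with |Γ| ≤ (C L^{−α})^{(deg(Γ) − deg(Γ*))/2} · |Γ*|. -/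

import Mathlib

open MeasureTheory Filter

noncomputable section

def anorm {d : ℕ} (s : Fin d → ℝ) (x : Fin d → ℝ) : ℝ :=
  ∑ j, |x j| ^ (1 / s j)

def CovBound {d : ℕ} (s : Fin d → ℝ) (α Λ ε : ℝ)
    (R : (Fin d → ℝ) → (Fin d → ℝ) → ℝ) : Prop :=
  ∀ x y, ε ^ α / (Λ * (anorm s (x - y) + ε) ^ α) ≤ R x y ∧
    R x y ≤ Λ * ε ^ α / (anorm s (x - y) + ε) ^ α

def SameCluster {d K : ℕ} (s : Fin d → ℝ) (δ : ℝ) (x : Fin K → Fin d → ℝ) :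
    Fin K → Fin K → Prop :=
  Relation.ReflTransGen fun i j => anorm s (x i - x j) ≤ δ

/-- `i` forms a singleton cluster. -/
def IsSingletonIdx {d K : ℕ} (s : Fin d → ℝ) (δ : ℝ) (x : Fin K → Fin d → ℝ)
    (i : Fin K) : Prop :=
  ∀ j, SameCluster s δ x i j → j = i

def gdeg {K : ℕ} (G : Fin K → Fin K → ℕ) (i : Fin K) : ℕ := ∑ j, G i j

def pairs (K : ℕ) : Finset (Fin K × Fin K) :=
  Finset.univ.filter fun p => p.1 < p.2

/-- The value `|Γ| = ∏_{i<j} R(i,j)^{𝓔(i,j)}` of a graph. -/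
def gval {K : ℕ} (R : Fin K → Fin K → ℝ) (G : Fin K → Fin K → ℕ) : ℝ :=
  ∏ p ∈ pairs K, R p.1 p.2 ^ G p.1 p.2

/-- Membership in `Ω_{k,ℓ}`: singletons `s` have degree `m + k_s`, representatives of
non-singleton clusters have degree `ℓ`, all other points have degree `0`. -/
def InOmega {K : ℕ} (Sing : Fin K → Prop) (u : Fin K → Fin K) (m : ℕ)
    (k l : Fin K → ℕ) (G : Fin K → Fin K → ℕ) : Prop :=
  (∀ i, Sing i → gdeg G i = m + k i) ∧
  (∀ i, ¬ Sing i → u i = i → gdeg G i = l i) ∧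
  (∀ i, ¬ Sing i → u i ≠ i → gdeg G i = 0)

/-- Membership in `Ω*`: singletons have degree `m` or `m+1`; representatives of non-singleton
clusters have degree `≤ m+1` and, if positive, all their edges go to one single singleton;
all other points have degree `0`. -/
def InOmegaStar {K : ℕ} (Sing : Fin K → Prop) (u : Fin K → Fin K) (m : ℕ)
    (G : Fin K → Fin K → ℕ) : Prop :=
  (∀ i, Sing i → gdeg G i = m ∨ gdeg G i = m + 1) ∧
  (∀ i, ¬ Sing i → u i = i →
    gdeg G i ≤ m + 1 ∧ (1 ≤ gdeg G i → ∃ s', Sing s' ∧ G s' i = gdeg G i)) ∧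
  (∀ i, ¬ Sing i → u i ≠ i → gdeg G i = 0)

/-!
Two moves remove one edge from a graph: deleting an edge `ab`, and contracting a path `a - b - c`
to the edge `ac`. Distinct representatives lie at distance at least `Lε`, so an edge between them
has weight at most `Λ L^{-α}`, which bounds the cost of a deletion. For a contraction, the longer of
the two edges of the path is at least half as long as `ac`, hence its weight is comparable to that
of `ac`, and the shorter one again contributes `L^{-α}`.

Contraction lowers only the degree of the middle vertex. Consider a singleton of degree at least
`m + 2`, or another representative whose edges do not all go to one singleton. If it has two
distinct neighbours, contract there. Otherwise all its edges go to one vertex, which in the first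
case has degree at least `m + 2` as well and in the second case is not a singleton, so one of these
edges can be deleted. If there is no such vertex, the graph lies in `Ω*`.
-/

section Decay

variable {α ε L t t₁ t₂ r : ℝ}

/-- The model covariance `(ε / (t + ε)) ^ α` at distance `t`, to which the standing covariance bound
compares the covariance `R`; powers are taken separately as in `CovBound`. -/
def decay (α ε t : ℝ) : ℝ := ε ^ α / (t + ε) ^ α

lemma decay_pos (hε : 0 < ε) (ht : 0 ≤ t) : 0 < decay α ε t := by
  unfold decay
  positivity

lemma decay_le_rpow_neg (hα : 0 ≤ α) (hε : 0 < ε) (hL : 0 < L) (ht : L * ε ≤ t) :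
    decay α ε t ≤ L ^ (-α) := by
  calc ε ^ α / (t + ε) ^ α ≤ ε ^ α / (L * ε) ^ α := by
        gcongr
        linarith
    _ = L ^ (-α) := by
        rw [Real.mul_rpow hL.le hε.le, Real.rpow_neg hL.le, div_mul_cancel_right₀ (by positivity)]

lemma decay_le_two_rpow_mul_decay (hα : 0 ≤ α) (hε : 0 < ε) (hr : 0 ≤ r) (h : r ≤ 2 * t) :
    decay α ε t ≤ 2 ^ α * decay α ε r := by
  have ht : 0 ≤ t := by linarith
  have hrt : (r + ε) ^ α ≤ 2 ^ α * (t + ε) ^ α := by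
    rw [← Real.mul_rpow zero_le_two (by positivity)]
    gcongr
    linarith
  unfold decay
  rw [← mul_div_assoc, div_le_div_iff₀ (by positivity) (by positivity)]
  calc ε ^ α * (r + ε) ^ α ≤ ε ^ α * (2 ^ α * (t + ε) ^ α) := by gcongr
    _ = 2 ^ α * ε ^ α * (t + ε) ^ α := by ring

lemma decay_mul_decay_le (hα : 0 ≤ α) (hε : 0 < ε) (hL : 0 < L) (hr : 0 ≤ r)
    (ht₁ : L * ε ≤ t₁) (ht₂ : L * ε ≤ t₂) (h : r ≤ t₁ + t₂) :
    decay α ε t₁ * decay α ε t₂ ≤ 2 ^ α * L ^ (-α) * decay α ε r := by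
  wlog hle : t₂ ≤ t₁ generalizing t₁ t₂
  · rw [mul_comm (decay α ε t₁)]
    exact this ht₂ ht₁ (by linarith) (le_of_not_ge hle)
  have hLε : 0 < L * ε := mul_pos hL hε
  have hr_pos := decay_pos (α := α) hε hr
  calc decay α ε t₁ * decay α ε t₂
      ≤ (2 ^ α * decay α ε r) * L ^ (-α) :=
        mul_le_mul (decay_le_two_rpow_mul_decay hα hε hr (by linarith))
          (decay_le_rpow_neg hα hε hL ht₂) (decay_pos hε (by linarith)).le (by positivity)
    _ = 2 ^ α * L ^ (-α) * decay α ε r := by ring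

end Decay

section Multigraph

variable {K : ℕ} {G H : Fin K → Fin K → ℕ} {a b c : Fin K} {w : Fin K → Fin K → ℝ}

/-- Multigraphs without loops on `Fin K`, given by their edge multiplicities. -/
structure IsMultigraph (G : Fin K → Fin K → ℕ) : Prop where
  symm : ∀ i j, G i j = G j i
  loopless : ∀ i, G i i = 0

/-- The graph whose only edge joins `a` and `b`; for `a = b` it would be a double loop. -/
def edgeGraph (a b : Fin K) : Fin K → Fin K → ℕ :=
  Pi.single a (Pi.single b 1) + Pi.single b (Pi.single a 1)

lemma edgeGraph_apply (a b i j : Fin K) :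
    edgeGraph a b i j = (if i = a ∧ j = b then 1 else 0) + if i = b ∧ j = a then 1 else 0 := by
  simp only [edgeGraph, Pi.add_apply, Pi.single_apply, apply_ite (fun f : Fin K → ℕ => f j),
    Pi.zero_apply, ite_and]

lemma edgeGraph_comm (a b : Fin K) : edgeGraph a b = edgeGraph b a := add_comm _ _

lemma isMultigraph_edgeGraph (hab : a ≠ b) : IsMultigraph (edgeGraph a b) where
  symm i j := by
    rw [edgeGraph_apply, edgeGraph_apply]
    grind
  loopless i := by
    rw [edgeGraph_apply]
    grind

namespace IsMultigraph

lemma add (hG : IsMultigraph G) (hH : IsMultigraph H) : IsMultigraph (G + H) where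
  symm i j := congrArg₂ (· + ·) (hG.symm i j) (hH.symm i j)
  loopless i := by rw [Pi.add_apply, Pi.add_apply, hG.loopless, hH.loopless]

lemma sub (hG : IsMultigraph G) (hH : IsMultigraph H) : IsMultigraph (G - H) where
  symm i j := congrArg₂ (· - ·) (hG.symm i j) (hH.symm i j)
  loopless i := by rw [Pi.sub_apply, Pi.sub_apply, hG.loopless, Nat.zero_sub]

lemma ne_of_pos (hG : IsMultigraph G) (hab : 0 < G a b) : a ≠ b := by
  rintro rfl
  exact hab.ne' (hG.loopless a)

lemma edgeGraph_le (hG : IsMultigraph G) (hab : 0 < G a b) : edgeGraph a b ≤ G := by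
  intro i j
  have hne := hG.ne_of_pos hab
  have hba := hG.symm a b
  rw [edgeGraph_apply]
  grind

lemma exists_eq_add_edgeGraph (hG : IsMultigraph G) (hab : 0 < G a b) :
    ∃ H, IsMultigraph H ∧ G = H + edgeGraph a b :=
  ⟨G - edgeGraph a b, hG.sub (isMultigraph_edgeGraph (hG.ne_of_pos hab)),
    (tsub_add_cancel_of_le (hG.edgeGraph_le hab)).symm⟩

lemma exists_eq_add_path (hG : IsMultigraph G) (hac : a ≠ c) (hab : 0 < G a b) (hbc : 0 < G b c) :
    ∃ H, IsMultigraph H ∧ G = H + (edgeGraph a b + edgeGraph b c) := by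
  obtain ⟨G₁, hG₁, rfl⟩ := hG.exists_eq_add_edgeGraph hab
  have hbc₁ : 0 < G₁ b c := by
    have hdisj : edgeGraph a b b c = 0 := by
      rw [edgeGraph_apply]
      grind
    simpa [hdisj] using hbc
  obtain ⟨H, hH, rfl⟩ := hG₁.exists_eq_add_edgeGraph hbc₁
  exact ⟨H, hH, by rw [add_assoc, add_comm (edgeGraph b c)]⟩

end IsMultigraph

lemma gdeg_add (G H : Fin K → Fin K → ℕ) : gdeg (G + H) = gdeg G + gdeg H :=
  funext fun _ => Finset.sum_add_distrib

lemma gdeg_edgeGraph (a b : Fin K) : gdeg (edgeGraph a b) = Pi.single a 1 + Pi.single b 1 := by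
  funext i
  simp only [gdeg, edgeGraph_apply, Finset.sum_add_distrib, ite_and, Pi.add_apply, Pi.single_apply]
  split_ifs <;> simp

lemma le_gdeg (G : Fin K → Fin K → ℕ) (i j : Fin K) : G i j ≤ gdeg G i :=
  Finset.single_le_sum (fun _ _ => Nat.zero_le _) (Finset.mem_univ j)

lemma sum_gdeg_add (G H : Fin K → Fin K → ℕ) :
    ∑ i, gdeg (G + H) i = ∑ i, gdeg G i + ∑ i, gdeg H i := by
  rw [gdeg_add]
  exact Finset.sum_add_distrib

lemma sum_gdeg_edgeGraph (a b : Fin K) : ∑ i, gdeg (edgeGraph a b) i = 2 := by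
  simp [gdeg_edgeGraph, Finset.sum_add_distrib]

lemma exists_two_neighbours_or_eq_gdeg (hb : 0 < gdeg G b) :
    (∃ a c, a ≠ c ∧ 0 < G b a ∧ 0 < G b c) ∨ ∃ a, G b a = gdeg G b := by
  obtain ⟨a, -, ha⟩ := Finset.exists_ne_zero_of_sum_ne_zero hb.ne'
  by_cases h : ∃ c, a ≠ c ∧ 0 < G b c
  · obtain ⟨c, hac, hc⟩ := h
    exact .inl ⟨a, c, hac, Nat.pos_of_ne_zero ha, hc⟩
  · push Not at h
    exact .inr ⟨a, (Fintype.sum_eq_single a fun c hc => Nat.le_zero.mp (h c hc.symm)).symm⟩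

lemma gval_add (w : Fin K → Fin K → ℝ) (G H : Fin K → Fin K → ℕ) :
    gval w (G + H) = gval w G * gval w H := by
  simp only [gval, Pi.add_apply, pow_add, Finset.prod_mul_distrib]

lemma gval_pos (hw : ∀ i j, 0 < w i j) (G : Fin K → Fin K → ℕ) : 0 < gval w G :=
  Finset.prod_pos fun p _ => pow_pos (hw p.1 p.2) _

lemma gval_edgeGraph (hw : ∀ i j, w i j = w j i) (hab : a ≠ b) :
    gval w (edgeGraph a b) = w a b := by
  wlog h : a < b generalizing a b
  · rw [edgeGraph_comm, hw, this hab.symm (lt_of_le_of_ne (not_lt.mp h) hab.symm)]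
  have hedge : ∀ p ∈ pairs K, edgeGraph a b p.1 p.2 = if p = (a, b) then 1 else 0 := by
    rintro ⟨i, j⟩ hij
    have hlt : i < j := (Finset.mem_filter.mp hij).2
    rw [edgeGraph_apply]
    grind
  have hmem : (a, b) ∈ pairs K := Finset.mem_filter.mpr ⟨Finset.mem_univ _, h⟩
  calc gval w (edgeGraph a b)
      = ∏ p ∈ pairs K, if p = (a, b) then w p.1 p.2 else 1 :=
        Finset.prod_congr rfl fun p hp => by rw [hedge p hp, pow_ite, pow_one, pow_zero]
    _ = w a b := (Finset.prod_ite_eq' _ _ fun p => w p.1 p.2).trans (if_pos hmem)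

/-- The symmetric weights with the same graph values as `w`: `gval` only reads `w i j` for
`i < j`. -/
def symmWeight (w : Fin K → Fin K → ℝ) (i j : Fin K) : ℝ := w (min i j) (max i j)

lemma symmWeight_comm (w : Fin K → Fin K → ℝ) (i j : Fin K) :
    symmWeight w i j = symmWeight w j i := by
  rw [symmWeight, min_comm, max_comm, symmWeight]

lemma symmWeight_eq_or (w : Fin K → Fin K → ℝ) (i j : Fin K) :
    symmWeight w i j = w i j ∨ symmWeight w i j = w j i := by
  rcases le_total i j with h | h <;> simp [symmWeight, h]

lemma gval_symmWeight (w : Fin K → Fin K → ℝ) (G : Fin K → Fin K → ℕ) :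
    gval (symmWeight w) G = gval w G :=
  Finset.prod_congr rfl fun p hp => by
    have hlt : p.1 < p.2 := (Finset.mem_filter.mp hp).2
    rw [symmWeight, min_eq_left hlt.le, max_eq_right hlt.le]

end Multigraph

section Reduction

variable {K m n₁ n₂ : ℕ} {G G₁ G₂ : Fin K → Fin K → ℕ} {a b c : Fin K}
  {w : Fin K → Fin K → ℝ} {B : ℝ} {Sing : Fin K → Prop} {u : Fin K → Fin K}

/-- `H` has `n` edges fewer than `G`, at the cost of a factor at most `B` per lost edge. -/
structure IsReduction (w : Fin K → Fin K → ℝ) (B : ℝ) (n : ℕ) (G H : Fin K → Fin K → ℕ) :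
    Prop where
  sum_gdeg_eq : ∑ i, gdeg G i = ∑ i, gdeg H i + 2 * n
  gval_le : gval w G ≤ B ^ n * gval w H

lemma IsReduction.refl (w : Fin K → Fin K → ℝ) (B : ℝ) (G : Fin K → Fin K → ℕ) :
    IsReduction w B 0 G G :=
  ⟨rfl, by rw [pow_zero, one_mul]⟩

lemma IsReduction.trans (hB : 0 ≤ B) (h₁ : IsReduction w B n₁ G G₁)
    (h₂ : IsReduction w B n₂ G₁ G₂) : IsReduction w B (n₁ + n₂) G G₂ where
  sum_gdeg_eq := by rw [h₁.sum_gdeg_eq, h₂.sum_gdeg_eq]; ring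
  gval_le := calc
    gval w G ≤ B ^ n₁ * gval w G₁ := h₁.gval_le
    _ ≤ B ^ n₁ * (B ^ n₂ * gval w G₂) := by gcongr; exact h₂.gval_le
    _ = B ^ (n₁ + n₂) * gval w G₂ := by ring

lemma IsReduction.gval_le_rpow {n : ℕ} (h : IsReduction w B n G G₁) :
    gval w G ≤
      B ^ ((((∑ i, gdeg G i : ℕ) : ℝ) - ((∑ i, gdeg G₁ i : ℕ) : ℝ)) / 2) * gval w G₁ := by
  have hexp : (((∑ i, gdeg G i : ℕ) : ℝ) - ((∑ i, gdeg G₁ i : ℕ) : ℝ)) / 2 = n := by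
    rw [h.sum_gdeg_eq]
    push_cast
    ring
  rw [hexp, Real.rpow_natCast]
  exact h.gval_le

/-- Positive edge weights for which deleting an edge, or contracting a path of two edges to a
single one, costs a factor at most `B`, as long as all vertices involved are representatives, that
is, fixed by `u`. -/
structure HasReductionCost (u : Fin K → Fin K) (w : Fin K → Fin K → ℝ) (B : ℝ) : Prop where
  symm : ∀ i j, w i j = w j i
  pos : ∀ i j, 0 < w i j
  delete_le : ∀ {a b}, a ≠ b → u a = a → u b = b → w a b ≤ B
  contract_le : ∀ {a b c}, a ≠ b → b ≠ c → a ≠ c → u a = a → u b = b → u c = c →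
    w a b * w b c ≤ B * w a c

lemma HasReductionCost.isReduction_delete (hw : HasReductionCost u w B)
    (hab : a ≠ b) (ha : u a = a) (hb : u b = b) (H : Fin K → Fin K → ℕ) :
    IsReduction w B 1 (H + edgeGraph a b) H where
  sum_gdeg_eq := by rw [sum_gdeg_add, sum_gdeg_edgeGraph]
  gval_le := by
    have hH := gval_pos hw.pos H
    rw [gval_add, gval_edgeGraph hw.symm hab, pow_one, mul_comm]
    gcongr
    exact hw.delete_le hab ha hb

lemma HasReductionCost.isReduction_contract (hw : HasReductionCost u w B)
    (hab : a ≠ b) (hbc : b ≠ c) (hac : a ≠ c) (ha : u a = a) (hb : u b = b) (hc : u c = c)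
    (H : Fin K → Fin K → ℕ) :
    IsReduction w B 1 (H + (edgeGraph a b + edgeGraph b c)) (H + edgeGraph a c) where
  sum_gdeg_eq := by simp only [sum_gdeg_add, sum_gdeg_edgeGraph]
  gval_le := by
    have hH := gval_pos hw.pos H
    simp only [gval_add, gval_edgeGraph hw.symm hab, gval_edgeGraph hw.symm hbc,
      gval_edgeGraph hw.symm hac]
    calc gval w H * (w a b * w b c) ≤ gval w H * (B * w a c) :=
          mul_le_mul_of_nonneg_left (hw.contract_le hab hbc hac ha hb hc) hH.le
      _ = B ^ 1 * (gval w H * w a c) := by ring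

/-- The union of the classes `Ω_{k,ℓ}` over all `k` and `ℓ`, provided every singleton is its own
representative. -/
structure IsAdmissible (Sing : Fin K → Prop) (u : Fin K → Fin K) (m : ℕ)
    (G : Fin K → Fin K → ℕ) : Prop extends IsMultigraph G where
  le_gdeg_of_sing : ∀ i, Sing i → m ≤ gdeg G i
  gdeg_eq_zero : ∀ i, u i ≠ i → gdeg G i = 0

lemma InOmega.isAdmissible {k l : Fin K → ℕ} (h : InOmega Sing u m k l G)
    (hSing : ∀ i, Sing i → u i = i) (hG : IsMultigraph G) : IsAdmissible Sing u m G where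
  toIsMultigraph := hG
  le_gdeg_of_sing i hi := (Nat.le_add_right m (k i)).trans_eq (h.1 i hi).symm
  gdeg_eq_zero i hi := h.2.2 i (fun hs => hi (hSing i hs)) hi

namespace IsAdmissible

lemma fixed_left (hG : IsAdmissible Sing u m G) (hab : 0 < G a b) : u a = a := by
  by_contra hne
  exact (hab.trans_le (le_gdeg G a b)).ne' (hG.gdeg_eq_zero a hne)

lemma fixed_right (hG : IsAdmissible Sing u m G) (hab : 0 < G a b) : u b = b :=
  hG.fixed_left (hG.symm a b ▸ hab)

lemma exists_isReduction_delete (hG : IsAdmissible Sing u m G) (hw : HasReductionCost u w B)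
    (hab : 0 < G a b) (ha : Sing a → m < gdeg G a) (hb : Sing b → m < gdeg G b) :
    ∃ H, IsAdmissible Sing u m H ∧ IsReduction w B 1 G H := by
  have hne := hG.ne_of_pos hab
  have hua := hG.fixed_left hab
  have hub := hG.fixed_right hab
  obtain ⟨H, hH, rfl⟩ := hG.exists_eq_add_edgeGraph hab
  have hdeg : ∀ i, gdeg (H + edgeGraph a b) i =
      gdeg H i + ((if i = a then 1 else 0) + if i = b then 1 else 0) := fun i => by
    simp only [gdeg_add, gdeg_edgeGraph, Pi.add_apply, Pi.single_apply]
  refine ⟨H, ⟨hH, fun i hi => ?_, fun i hi => ?_⟩, hw.isReduction_delete hne hua hub H⟩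
  · have := hG.le_gdeg_of_sing i hi
    grind
  · have := hG.gdeg_eq_zero i hi
    grind

lemma exists_isReduction_contract (hG : IsAdmissible Sing u m G) (hw : HasReductionCost u w B)
    (hac : a ≠ c) (hab : 0 < G a b) (hbc : 0 < G b c) (hb : Sing b → m + 2 ≤ gdeg G b) :
    ∃ H, IsAdmissible Sing u m H ∧ IsReduction w B 1 G H := by
  have hne := hG.ne_of_pos hab
  have hne' := hG.ne_of_pos hbc
  have hua := hG.fixed_left hab
  have hub := hG.fixed_right hab
  have huc := hG.fixed_right hbc
  obtain ⟨H, hH, rfl⟩ := hG.exists_eq_add_path hac hab hbc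
  have hdeg : ∀ i, gdeg (H + (edgeGraph a b + edgeGraph b c)) i =
      gdeg (H + edgeGraph a c) i + if i = b then 2 else 0 := fun i => by
    simp only [gdeg_add, gdeg_edgeGraph, Pi.add_apply, Pi.single_apply]
    grind
  refine ⟨H + edgeGraph a c,
    ⟨hH.add (isMultigraph_edgeGraph hac), fun i hi => ?_, fun i hi => ?_⟩,
    hw.isReduction_contract hne hne' hac hua hub huc H⟩
  · have := hG.le_gdeg_of_sing i hi
    grind
  · have := hG.gdeg_eq_zero i hi
    grind

lemma exists_isReduction_at (hG : IsAdmissible Sing u m G) (hw : HasReductionCost u w B)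
    (hpos : 0 < gdeg G b) (hb : Sing b → m + 2 ≤ gdeg G b)
    (hnbr : ∀ a, Sing a → G b a = gdeg G b → m < gdeg G a) :
    ∃ H, IsAdmissible Sing u m H ∧ IsReduction w B 1 G H := by
  rcases exists_two_neighbours_or_eq_gdeg hpos with ⟨a, c, hac, hba, hbc⟩ | ⟨a, ha⟩
  · exact hG.exists_isReduction_contract hw hac (hG.symm b a ▸ hba) hbc hb
  · exact hG.exists_isReduction_delete hw (ha ▸ hpos)
      (fun h => (Nat.lt_succ_self m).trans (hb h)) fun h => hnbr a h ha

lemma inOmegaStar (hG : IsAdmissible Sing u m G) (hSing : ∀ i, Sing i → gdeg G i ≤ m + 1)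
    (hrep : ∀ i, ¬ Sing i → 0 < gdeg G i → ∃ a, Sing a ∧ G a i = gdeg G i) :
    InOmegaStar Sing u m G := by
  refine ⟨fun i hi => ?_, fun i hi _ => ⟨?_, hrep i hi⟩, fun i _ => hG.gdeg_eq_zero i⟩
  · have := hG.le_gdeg_of_sing i hi
    have := hSing i hi
    omega
  · rcases (gdeg G i).eq_zero_or_pos with h0 | hpos
    · omega
    · obtain ⟨a, ha, hai⟩ := hrep i hi hpos
      exact hai.symm.le.trans ((le_gdeg G a i).trans (hSing a ha))

lemma exists_isReduction_of_not_inOmegaStar (hG : IsAdmissible Sing u m G)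
    (hw : HasReductionCost u w B) (hnot : ¬ InOmegaStar Sing u m G) :
    ∃ H, IsAdmissible Sing u m H ∧ IsReduction w B 1 G H := by
  by_contra hirred
  refine hnot (hG.inOmegaStar (fun b _ => ?_) fun b hb hpos => ?_)
  · by_contra! hdeg
    refine hirred (hG.exists_isReduction_at hw (b := b) (by omega) (fun _ => hdeg) ?_)
    intro a _ hba
    have := le_gdeg G a b
    have := hG.symm a b
    omega
  · by_contra! hnone
    refine hirred (hG.exists_isReduction_at hw hpos (fun h => absurd h hb) fun a ha hba => ?_)
    exact absurd ((hG.symm a b).trans hba) (hnone a ha)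

lemma exists_isReduction_inOmegaStar (hG : IsAdmissible Sing u m G)
    (hw : HasReductionCost u w B) (hB : 0 ≤ B) :
    ∃ H n, IsAdmissible Sing u m H ∧ InOmegaStar Sing u m H ∧ IsReduction w B n G H := by
  induction hN : ∑ i, gdeg G i using Nat.strong_induction_on generalizing G with
  | _ N ih =>
    by_cases hstar : InOmegaStar Sing u m G
    · exact ⟨G, 0, hG, hstar, .refl w B G⟩
    · obtain ⟨G₁, hG₁, h₁⟩ := hG.exists_isReduction_of_not_inOmegaStar hw hstar
      have hlt : ∑ i, gdeg G₁ i < N := by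
        have := h₁.sum_gdeg_eq
        omega
      obtain ⟨H, n, hH, hH', h₂⟩ := ih _ hlt hG₁ rfl
      exact ⟨H, 1 + n, hH, hH', h₁.trans hB h₂⟩

end IsAdmissible

end Reduction

section Covariance

variable {X : Type*} [PseudoMetricSpace X] {K : ℕ} {α Λ ε L : ℝ} {x : Fin K → X}
  {w : Fin K → Fin K → ℝ} {u : Fin K → Fin K}

/-- The standing covariance bound for weights `w` between the points `x i` of a pseudometric
space. -/
def WeightBound (α Λ ε : ℝ) (x : Fin K → X) (w : Fin K → Fin K → ℝ) : Prop :=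
  ∀ i j, decay α ε (dist (x i) (x j)) / Λ ≤ w i j ∧ w i j ≤ Λ * decay α ε (dist (x i) (x j))

lemma WeightBound.symm (hw : WeightBound α Λ ε x w) :
    WeightBound α Λ ε x (symmWeight w) := by
  intro i j
  rcases symmWeight_eq_or w i j with h | h <;> rw [h]
  · exact hw i j
  · rw [dist_comm]
    exact hw j i

lemma WeightBound.pos (hw : WeightBound α Λ ε x w) (hΛ : 0 < Λ) (hε : 0 < ε) (i j : Fin K) :
    0 < w i j :=
  (div_pos (decay_pos hε dist_nonneg) hΛ).trans_le (hw i j).1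

lemma WeightBound.le_of_le_dist (hw : WeightBound α Λ ε x w) (hα : 0 ≤ α) (hΛ : 1 ≤ Λ)
    (hε : 0 < ε) (hL : 0 < L) {i j : Fin K} (hij : L * ε ≤ dist (x i) (x j)) :
    w i j ≤ Λ ^ 3 * 2 ^ α * L ^ (-α) := by
  have hconst : Λ ≤ Λ ^ 3 * 2 ^ α :=
    (le_self_pow₀ hΛ three_ne_zero).trans
      (le_mul_of_one_le_right (by positivity) (Real.one_le_rpow one_le_two hα))
  calc w i j ≤ Λ * decay α ε (dist (x i) (x j)) := (hw i j).2
    _ ≤ Λ * L ^ (-α) := by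
        gcongr
        exact decay_le_rpow_neg hα hε hL hij
    _ ≤ Λ ^ 3 * 2 ^ α * L ^ (-α) := by gcongr

lemma WeightBound.mul_le_of_le_dist (hw : WeightBound α Λ ε x w) (hα : 0 ≤ α) (hΛ : 0 < Λ)
    (hε : 0 < ε) (hL : 0 < L) {a b c : Fin K} (hab : L * ε ≤ dist (x a) (x b))
    (hbc : L * ε ≤ dist (x b) (x c)) :
    w a b * w b c ≤ Λ ^ 3 * 2 ^ α * L ^ (-α) * w a c := by
  have hac : decay α ε (dist (x a) (x c)) ≤ w a c * Λ := (div_le_iff₀ hΛ).mp (hw a c).1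
  calc w a b * w b c
      ≤ (Λ * decay α ε (dist (x a) (x b))) * (Λ * decay α ε (dist (x b) (x c))) :=
        mul_le_mul (hw a b).2 (hw b c).2 (hw.pos hΛ hε b c).le
          ((hw.pos hΛ hε a b).le.trans (hw a b).2)
    _ = Λ ^ 2 * (decay α ε (dist (x a) (x b)) * decay α ε (dist (x b) (x c))) := by ring
    _ ≤ Λ ^ 2 * (2 ^ α * L ^ (-α) * decay α ε (dist (x a) (x c))) :=
        mul_le_mul_of_nonneg_left
          (decay_mul_decay_le hα hε hL dist_nonneg hab hbc (dist_triangle _ _ _)) (sq_nonneg Λ)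
    _ ≤ Λ ^ 2 * (2 ^ α * L ^ (-α) * (w a c * Λ)) := by gcongr
    _ = Λ ^ 3 * 2 ^ α * L ^ (-α) * w a c := by ring

lemma WeightBound.hasReductionCost (hw : WeightBound α Λ ε x w) (hα : 0 ≤ α) (hΛ : 1 ≤ Λ)
    (hε : 0 < ε) (hL : 0 < L)
    (hsep : ∀ i j, i ≠ j → u i = i → u j = j → L * ε ≤ dist (x i) (x j)) :
    HasReductionCost u (symmWeight w) (Λ ^ 3 * 2 ^ α * L ^ (-α)) where
  symm := symmWeight_comm w
  pos := hw.symm.pos (by positivity) hε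
  delete_le hab ha hb := hw.symm.le_of_le_dist hα hΛ hε hL (hsep _ _ hab ha hb)
  contract_le hab hbc _ ha hb hc :=
    hw.symm.mul_le_of_le_dist hα (by positivity) hε hL (hsep _ _ hab ha hb)
      (hsep _ _ hbc hb hc)

end Covariance

theorem stmt8_general {X : Type*} [PseudoMetricSpace X] {α Λ ε L : ℝ} (hα : 0 ≤ α) (hΛ : 1 ≤ Λ)
    (hε : 0 < ε) (hL : 0 < L) {m K : ℕ} {x : Fin K → X} {w : Fin K → Fin K → ℝ}
    (hw : WeightBound α Λ ε x w) {Sing : Fin K → Prop} {u : Fin K → Fin K}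
    (hSing : ∀ i, Sing i → u i = i)
    (hsep : ∀ i j, i ≠ j → u i = i → u j = j → L * ε ≤ dist (x i) (x j))
    {k l : Fin K → ℕ} {G : Fin K → Fin K → ℕ} (hG : IsMultigraph G)
    (hΩ : InOmega Sing u m k l G) :
    ∃ G' : Fin K → Fin K → ℕ,
      (∀ i j, G' i j = G' j i) ∧ (∀ i, G' i i = 0) ∧ InOmegaStar Sing u m G' ∧
      gval w G ≤
        (Λ ^ 3 * 2 ^ α * L ^ (-α)) ^
            ((((∑ i, gdeg G i : ℕ) : ℝ) - ((∑ i, gdeg G' i : ℕ) : ℝ)) / 2) *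
          gval w G' := by
  obtain ⟨G', n, hG', hstar, hred⟩ :=
    (hΩ.isAdmissible hSing hG).exists_isReduction_inOmegaStar
      (hw.hasReductionCost hα hΛ hε hL hsep) (by positivity)
  refine ⟨G', hG'.symm, hG'.loopless, hstar, ?_⟩
  simpa only [gval_symmWeight] using hred.gval_le_rpow

section Anisotropic

variable {d K : ℕ} {s : Fin d → ℝ} {α Λ ε δ : ℝ} {x : Fin K → Fin d → ℝ} {u : Fin K → Fin K}

lemma anorm_zero (hs : ∀ j, s j ≠ 0) : anorm s 0 = 0 :=
  Finset.sum_eq_zero fun j _ => by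
    rw [Pi.zero_apply, abs_zero, Real.zero_rpow (one_div_ne_zero (hs j))]

lemma anorm_sub_comm (s y z : Fin d → ℝ) : anorm s (y - z) = anorm s (z - y) := by
  simp only [anorm, Pi.sub_apply, abs_sub_comm]

lemma anorm_add_le (hs : ∀ j, 1 ≤ s j) (y z : Fin d → ℝ) :
    anorm s (y + z) ≤ anorm s y + anorm s z := by
  unfold anorm
  rw [← Finset.sum_add_distrib]
  refine Finset.sum_le_sum fun j _ => ?_
  have h0 : 0 ≤ 1 / s j := one_div_nonneg.mpr (zero_le_one.trans (hs j))
  have h1 : 1 / s j ≤ 1 := (div_le_one (zero_lt_one.trans_le (hs j))).mpr (hs j)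
  calc |y j + z j| ^ (1 / s j) ≤ (|y j| + |z j|) ^ (1 / s j) := by
        gcongr
        exact abs_add_le _ _
    _ ≤ |y j| ^ (1 / s j) + |z j| ^ (1 / s j) :=
        Real.rpow_add_le_add_rpow (abs_nonneg _) (abs_nonneg _) h0 h1

/-- The anisotropic metric `|y - z|_s` on `ℝ^d`; not an instance, since `Fin d → ℝ` already carries
the sup metric. -/
abbrev anisotropicMetric (hs : ∀ j, 1 ≤ s j) : PseudoMetricSpace (Fin d → ℝ) where
  dist y z := anorm s (y - z)
  dist_self y := by rw [sub_self, anorm_zero fun j => (zero_lt_one.trans_le (hs j)).ne']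
  dist_comm := anorm_sub_comm s
  dist_triangle y z v := by
    simpa only [sub_add_sub_cancel] using anorm_add_le hs (y - z) (z - v)

lemma CovBound.weightBound {R : (Fin d → ℝ) → (Fin d → ℝ) → ℝ} (hR : CovBound s α Λ ε R)
    (hs : ∀ j, 1 ≤ s j) :
    letI := anisotropicMetric hs
    WeightBound α Λ ε x fun i j => R (x i) (x j) := by
  intro i j
  rw [decay, div_div, ← mul_div_assoc, mul_comm _ Λ]
  exact hR (x i) (x j)

lemma lt_anorm_sub_of_representatives (hu : ∀ i j, SameCluster s δ x i j → u i = u j)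
    (i j : Fin K) (hij : i ≠ j) (hi : u i = i) (hj : u j = j) : δ < anorm s (x i - x j) :=
  not_le.mp fun h => hij (hi.symm.trans ((hu i j (.single h)).trans hj))

end Anisotropic

/-- Proposition 2.6, reduction: every `Γ ∈ Ω_{k,ℓ}` is bounded by some
`Γ* ∈ Ω*` at cost `(C L^{−α})^{(deg Γ − deg Γ*)/2}`, with `C = C(Λ, α)` only. -/
theorem stmt8 (α Λ : ℝ) (hα : 0 < α) (hΛ : 1 < Λ) :
    ∃ C > 0, ∀ (d : ℕ), 1 ≤ d → ∀ s : Fin d → ℝ, (∀ j, 1 ≤ s j) →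
      ∀ ε ∈ Set.Ioo (0:ℝ) 1, ∀ (m K : ℕ), 1 ≤ K → ∀ L : ℝ, 0 < L →
      ∀ (x : Fin K → Fin d → ℝ) (R : (Fin d → ℝ) → (Fin d → ℝ) → ℝ),
        CovBound s α Λ ε R →
        ∀ u : Fin K → Fin K,
          (∀ i, SameCluster s (L * ε) x i (u i)) →
          (∀ i j, SameCluster s (L * ε) x i j → u i = u j) →
        ∀ (k l : Fin K → ℕ) (G : Fin K → Fin K → ℕ),
          (∀ i j, G i j = G j i) → (∀ i, G i i = 0) →
          InOmega (IsSingletonIdx s (L * ε) x) u m k l G →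
          ∃ G' : Fin K → Fin K → ℕ,
            (∀ i j, G' i j = G' j i) ∧ (∀ i, G' i i = 0) ∧
            InOmegaStar (IsSingletonIdx s (L * ε) x) u m G' ∧
            gval (fun i j => R (x i) (x j)) G ≤
              (C * L ^ (-α)) ^ ((((∑ i, gdeg G i : ℕ) : ℝ) - ((∑ i, gdeg G' i : ℕ) : ℝ)) / 2) *
                gval (fun i j => R (x i) (x j)) G' := by
  refine ⟨Λ ^ 3 * 2 ^ α, by positivity, ?_⟩
  intro d _ s hs ε hε m K _ L hL x R hR u hu hu' k l G hsymm hself hΩ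
  let _ := anisotropicMetric hs
  exact stmt8_general hα.le hΛ.le hε.1 hL (hR.weightBound hs) (fun i hi => hi _ (hu i))
    (fun i j hij hi hj => (lt_anorm_sub_of_representatives hu' i j hij hi hj).le)
    ⟨hsymm, hself⟩ hΩ
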